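/- arXiv:2601.11463 — 5 statements merged into one kernel-verified Lean document; each statement's English description precedes it below -/
import Mathlib

section
/- Let K and L be compact Hausdorff spaces and suppose there exists a positive isomorphic embedding T : C(K) → C(L). Then for every ordinal α, if the α-th Cantor–Bendixson derivative K^(α) is nonempty, then L^(α) is nonempty as well; in particular, if L is scattered then K is scattered and ht(K) ≤ ht(L). -/
open Ordinal Set

/-- The Cantor–Bendixson derivative of order `o` of a topological space `X`:
`cbDeriv X 0 = univ`, `cbDeriv X (o+1)` is the set of accumulation points of `cbDeriv X o`,
and at limit ordinals we take the intersection of the previous derivatives. -/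
noncomputable def cbDeriv (X : Type*) [TopologicalSpace X] : Ordinal.{0} → Set X :=
  fun o => Ordinal.limitRecOn o Set.univ
    (fun _ ih => derivedSet ih)
    (fun o _ ih => ⋂ (β : Ordinal) (h : β < o), ih β h)

/-- A space is scattered if some Cantor–Bendixson derivative is empty. -/
def Scattered (X : Type*) [TopologicalSpace X] : Prop :=
  ∃ o : Ordinal.{0}, cbDeriv X o = ∅

/-- The Cantor–Bendixson height: the least ordinal whose derivative is empty. -/
noncomputable def cbHeight (X : Type*) [TopologicalSpace X] : Ordinal.{0} :=
  sInf {o : Ordinal | cbDeriv X o = ∅}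

open Filter Topology
open scoped SetRel

/-!
Write `μ_y` for the positive functional `f ↦ T f y` and relate `x : K` to `y : L` when `μ_y` has an
atom of mass at least `c` at `x`. This relation is closed; by compactness of `L` and the lower bound
on `T` it relates every `x` to some `y`; and since each `μ_y` has finite mass, it relates only
finitely many `x` to a given `y`. Along any closed relation with these properties, accumulation of
points of `K` forces accumulation of related points of `L`, so transfinite induction carries each
derivative of `K` into the corresponding derivative of `L`.
-/

section CantorBendixson

variable {X Y : Type*} [TopologicalSpace X] [TopologicalSpace Y]

variable (X) in
theorem cbDeriv_zero : cbDeriv X 0 = Set.univ := by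
  simp [cbDeriv]

variable (X) in
theorem cbDeriv_add_one (o : Ordinal.{0}) : cbDeriv X (o + 1) = derivedSet (cbDeriv X o) := by
  simp [cbDeriv]

variable (X) in
theorem cbDeriv_of_isSuccLimit {o : Ordinal.{0}} (ho : Order.IsSuccLimit o) :
    cbDeriv X o = ⋂ β : Iio o, cbDeriv X β := by
  rw [iInter_subtype, cbDeriv, Ordinal.limitRecOn_limit (h := ho)]
  rfl

theorem isClosed_derivedSet_of_isClosed {A : Set X} (hA : IsClosed A) :
    IsClosed (derivedSet A) := by
  have hsub : derivedSet A ⊆ A := (isClosed_iff_derivedSet_subset A).1 hA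
  refine isClosed_of_closure_subset fun x hx ↦ ?_
  rw [mem_derivedSet, accPt_iff_nhds]
  intro U hU
  obtain ⟨y, hyU, hyA⟩ := mem_closure_iff_nhds.1 hx U hU
  by_cases hyx : y = x
  · rw [hyx, mem_derivedSet, accPt_iff_nhds] at hyA
    exact hyA U hU
  · exact ⟨y, ⟨hyU, hsub hyA⟩, hyx⟩

theorem isClosed_cbDeriv (o : Ordinal.{0}) : IsClosed (cbDeriv X o) := by
  induction o using Ordinal.limitRecOn with
  | zero => exact cbDeriv_zero X ▸ isClosed_univ
  | add_one o ih => exact cbDeriv_add_one X o ▸ isClosed_derivedSet_of_isClosed ih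
  | limit o ho ih =>
    rw [cbDeriv_of_isSuccLimit X ho]
    exact isClosed_iInter fun β ↦ ih β β.2

theorem cbDeriv_antitone : Antitone (cbDeriv X) := by
  intro β o hβo
  induction o using Ordinal.limitRecOn with
  | zero => rw [nonpos_iff_eq_zero.1 hβo]
  | add_one o ih =>
    rcases hβo.eq_or_lt with rfl | hlt
    · rfl
    · rw [cbDeriv_add_one]
      exact ((isClosed_iff_derivedSet_subset _).1 (isClosed_cbDeriv o)).trans
        (ih (Order.lt_add_one_iff.1 hlt))
  | limit o ho ih =>
    rcases hβo.eq_or_lt with rfl | hlt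
    · rfl
    · rw [cbDeriv_of_isSuccLimit X ho]
      exact iInter_subset (fun γ : Iio o ↦ cbDeriv X γ) ⟨β, hlt⟩

theorem cbDeriv_eq_empty_of_nonempty_imp
    (h : ∀ α, (cbDeriv X α).Nonempty → (cbDeriv Y α).Nonempty) {α : Ordinal.{0}}
    (hα : cbDeriv Y α = ∅) : cbDeriv X α = ∅ :=
  not_nonempty_iff_eq_empty.1 fun hne ↦ (h α hne).ne_empty hα

theorem scattered_and_cbHeight_le_of_nonempty_imp
    (h : ∀ α, (cbDeriv X α).Nonempty → (cbDeriv Y α).Nonempty) (hY : Scattered Y) :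
    Scattered X ∧ cbHeight X ≤ cbHeight Y := by
  have hX : cbDeriv X (cbHeight Y) = ∅ := cbDeriv_eq_empty_of_nonempty_imp h (csInf_mem hY)
  exact ⟨⟨_, hX⟩, csInf_le' hX⟩

end CantorBendixson

section ClosedRelation

variable {X Y : Type*} [TopologicalSpace X] [TopologicalSpace Y] [CompactSpace Y] {R : SetRel X Y}

theorem derivedSet_preimage_subset (hR : IsClosed R)
    (hfib : ∀ y, derivedSet (R.preimage {y}) = ∅) (B : Set Y) :
    derivedSet (R.preimage B) ⊆ R.preimage (derivedSet B) := by
  intro x hx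
  have hpre : Prod.fst '' (R ∩ Prod.snd ⁻¹' B) = R.preimage B := by
    ext a
    simp [and_comm]
  let F : Filter (X × Y) := 𝓟 (R ∩ Prod.snd ⁻¹' B) ⊓ comap Prod.fst (𝓝[≠] x)
  have hF : F.NeBot := by
    rw [neBot_inf_comap_iff_map, map_principal, hpre, inf_comm]
    exact hx
  obtain ⟨u, hu⟩ := Ultrafilter.exists_le F
  have hmem : ∀ᶠ p in u, p ∈ R ∩ Prod.snd ⁻¹' B := le_principal_iff.1 (hu.trans inf_le_left)
  have hfst : Tendsto Prod.fst (u : Filter (X × Y)) (𝓝[≠] x) :=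
    tendsto_iff_comap.2 (hu.trans inf_le_right)
  obtain ⟨y, -, hsnd : Tendsto Prod.snd (u : Filter (X × Y)) (𝓝 y)⟩ :=
    isCompact_univ.ultrafilter_le_nhds (u.map Prod.snd) (by simp)
  have hxy : x ~[R] y :=
    hR.mem_of_tendsto ((hfst.mono_right nhdsWithin_le_nhds).prodMk_nhds hsnd)
      (hmem.mono fun _ ↦ And.left)
  have hsnd_ne : ∀ᶠ p : X × Y in u, p.2 ≠ y := by
    refine Ultrafilter.eventually_not.2 fun hsnd_eq ↦ ?_
    have hfst_mem : ∀ᶠ p : X × Y in u, p.1 ∈ R.preimage {y} := by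
      filter_upwards [hmem, hsnd_eq] with p hp hpy using ⟨p.2, hpy, hp.1⟩
    have hacc : x ∈ derivedSet (R.preimage {y}) :=
      (tendsto_inf.2 ⟨hfst, tendsto_principal.2 hfst_mem⟩).neBot
    exact (hfib y).subset hacc
  have hy : y ∈ derivedSet B :=
    (tendsto_inf.2 ⟨tendsto_nhdsWithin_iff.2 ⟨hsnd, hsnd_ne⟩,
      tendsto_principal.2 (hmem.mono fun _ ↦ And.right)⟩).neBot
  exact ⟨y, hy, hxy⟩

theorem iInter_preimage_subset {ι : Type*} [Nonempty ι] (hR : IsClosed R) {B : ι → Set Y}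
    (hdir : Directed (· ⊇ ·) B) (hB : ∀ i, IsClosed (B i)) :
    ⋂ i, R.preimage (B i) ⊆ R.preimage (⋂ i, B i) := by
  intro x hx
  let fiber : Set Y := {y | x ~[R] y}
  have hclosed (i : ι) : IsClosed (B i ∩ fiber) :=
    (hB i).inter (hR.preimage (Continuous.prodMk_right x))
  have hdir_inter : Directed (· ⊇ ·) fun i ↦ B i ∩ fiber :=
    hdir.mono_comp (g := (· ∩ fiber)) _ fun _ _ h ↦ inter_subset_inter_left _ h
  obtain ⟨y, hy⟩ := IsCompact.nonempty_iInter_of_directed_nonempty_isCompact_isClosed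
    (fun i ↦ B i ∩ fiber) hdir_inter (mem_iInter.1 hx) (fun i ↦ (hclosed i).isCompact) hclosed
  rw [← iInter_inter] at hy
  exact ⟨y, hy⟩

theorem cbDeriv_subset_preimage_cbDeriv (hR : IsClosed R) (hdom : R.dom = Set.univ)
    (hfib : ∀ y, derivedSet (R.preimage {y}) = ∅) (α : Ordinal.{0}) :
    cbDeriv X α ⊆ R.preimage (cbDeriv Y α) := by
  induction α using Ordinal.limitRecOn with
  | zero => rw [cbDeriv_zero Y, SetRel.preimage_univ_right, hdom]; exact subset_univ _
  | add_one α ih =>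
    rw [cbDeriv_add_one, cbDeriv_add_one]
    exact (derivedSet_mono _ _ ih).trans (derivedSet_preimage_subset hR hfib _)
  | limit α hα ih =>
    have : Nonempty (Iio α) := ⟨⟨0, hα.bot_lt⟩⟩
    rw [cbDeriv_of_isSuccLimit X hα, cbDeriv_of_isSuccLimit Y hα]
    have hanti : Antitone fun β : Iio α ↦ cbDeriv Y β :=
      cbDeriv_antitone.comp_monotone (Subtype.mono_coe _)
    exact (iInter_mono fun β : Iio α ↦ ih β β.2).trans
      (iInter_preimage_subset hR hanti.directed_ge fun β ↦ isClosed_cbDeriv β.1)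

end ClosedRelation

section ContinuousFunctions

variable {X : Type*} [TopologicalSpace X]

theorem exists_continuousMap_eq_one_eqOn_compl [CompletelyRegularSpace X] {U : Set X}
    (hU : IsOpen U) {x : X} (hx : x ∈ U) :
    ∃ f : C(X, ℝ), 0 ≤ f ∧ f ≤ 1 ∧ f x = 1 ∧ EqOn f 0 Uᶜ := by
  obtain ⟨g, hg, hgx, hgU⟩ :=
    CompletelyRegularSpace.completely_regular x Uᶜ hU.isClosed_compl (by simpa using hx)
  refine ⟨⟨fun z ↦ 1 - g z, by fun_prop⟩, fun z ↦ ?_, fun z ↦ ?_, ?_, fun z hz ↦ ?_⟩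
  · exact sub_nonneg.2 (g z).2.2
  · exact sub_le_self 1 (g z).2.1
  · simp [hgx]
  · simp [hgU hz]

theorem exists_sum_le_one_of_finset [T35Space X] (s : Finset X) :
    ∃ f : X → C(X, ℝ), (∀ x, 0 ≤ f x) ∧ (∀ x, f x x = 1) ∧ ∑ x ∈ s, f x ≤ 1 := by
  obtain ⟨U, hU, hdisj⟩ := s.finite_toSet.t2_separation
  choose f hf₀ hf₁ hfx hfU using fun x ↦ exists_continuousMap_eq_one_eqOn_compl (hU x).2 (hU x).1
  refine ⟨f, hf₀, hfx, ContinuousMap.le_def.2 fun z ↦ ?_⟩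
  rw [ContinuousMap.sum_apply, ContinuousMap.one_apply]
  by_cases hz : ∃ x ∈ s, z ∈ U x
  · obtain ⟨x, hxs, hzx⟩ := hz
    have hvanish : ∀ x' ∈ s, x' ≠ x → f x' z = 0 := fun x' hx's hne ↦
      hfU x' fun hzx' ↦ disjoint_left.1 (hdisj hx's hxs hne) hzx' hzx
    rw [Finset.sum_eq_single_of_mem x hxs hvanish]
    exact hf₁ x z
  · push Not at hz
    rw [Finset.sum_eq_zero fun x hx ↦ hfU x (hz x hx)]
    exact zero_le_one

theorem exists_le_apply_of_le_norm [CompactSpace X] {g : C(X, ℝ)} (hg : 0 ≤ g) {c : ℝ}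
    (hc : 0 < c) (h : c ≤ ‖g‖) : ∃ x, c ≤ g x := by
  contrapose! h
  refine (ContinuousMap.norm_lt_iff g hc).2 fun x ↦ ?_
  have hgx : 0 ≤ g x := hg x
  rw [Real.norm_of_nonneg hgx]
  exact h x

theorem exists_le_apply_of_mul_norm_le {Y : Type*} [TopologicalSpace Y] [CompactSpace X]
    [CompactSpace Y] {f : C(X, ℝ)} {g : C(Y, ℝ)} (hg : 0 ≤ g) {c : ℝ} (hc : 0 < c)
    (h : c * ‖f‖ ≤ ‖g‖) {x : X} (hfx : f x = 1) : ∃ y, c ≤ g y := by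
  have hf : 1 ≤ ‖f‖ := hfx ▸ (le_abs_self _).trans (f.norm_coe_le_norm x)
  exact exists_le_apply_of_le_norm hg hc ((le_mul_of_one_le_right hc.le hf).trans h)

end ContinuousFunctions

section AtomRel

variable {K L : Type*} [TopologicalSpace K] [TopologicalSpace L]

/-- The relation between `x : K` and `y : L` saying that the positive functional `f ↦ T f y`
dominates `c` times evaluation at `x`. When `K` is compact Hausdorff, this means that the measure
representing that functional has mass at least `c` at `x`; the encoding avoids measures. -/
def atomRel (T : C(K, ℝ) →ₚ[ℝ] C(L, ℝ)) (c : ℝ) : SetRel K L :=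
  {p | ∀ f : C(K, ℝ), 0 ≤ f → c * f p.1 ≤ T f p.2}

variable (T : C(K, ℝ) →ₚ[ℝ] C(L, ℝ)) {c : ℝ}

theorem isClosed_atomRel (c : ℝ) : IsClosed (atomRel T c) := by
  simp only [atomRel, ofPred_forall]
  exact isClosed_iInter fun f ↦ isClosed_iInter fun _ ↦ isClosed_le (by fun_prop) (by fun_prop)

theorem mem_atomRel_of_forall_eq_one {x : K} {y : L}
    (h : ∀ f : C(K, ℝ), 0 ≤ f → f x = 1 → c ≤ T f y) : x ~[atomRel T c] y := by
  intro f hf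
  have hfx₀ : 0 ≤ f x := hf x
  rcases hfx₀.eq_or_lt with hfx | hfx
  · simpa [← hfx] using map_nonneg T hf y
  · have hscale := h ((f x)⁻¹ • f) (smul_nonneg (inv_nonneg.2 hfx.le) hf)
      (by simpa using inv_mul_cancel₀ hfx.ne')
    rw [map_smul, ContinuousMap.smul_apply, _root_.smul_eq_mul, inv_mul_eq_div] at hscale
    exact (le_div_iff₀ hfx).1 hscale

theorem dom_atomRel_eq_univ [CompactSpace L]
    (hT : ∀ f : C(K, ℝ), 0 ≤ f → ∀ x, f x = 1 → ∃ y, c ≤ T f y) :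
    (atomRel T c).dom = Set.univ := by
  refine eq_univ_of_forall fun x ↦ ?_
  let I := {f : C(K, ℝ) // 0 ≤ f ∧ f x = 1}
  have : Nonempty I := ⟨⟨1, zero_le_one, rfl⟩⟩
  let S (f : I) : Set L := {y | c ≤ T f y}
  have hdir : Directed (· ⊇ ·) S := fun f g ↦
    ⟨⟨f ⊓ g, le_inf f.2.1 g.2.1, by simp [f.2.2, g.2.2]⟩,
      fun y hy ↦ hy.trans (OrderHomClass.mono T inf_le_left y),
      fun y hy ↦ hy.trans (OrderHomClass.mono T inf_le_right y)⟩
  have hclosed (f : I) : IsClosed (S f) := isClosed_le (by fun_prop) (by fun_prop)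
  obtain ⟨y, hy⟩ := IsCompact.nonempty_iInter_of_directed_nonempty_isCompact_isClosed S hdir
    (fun f ↦ hT f f.2.1 x f.2.2) (fun f ↦ (hclosed f).isCompact) hclosed
  exact ⟨y, mem_atomRel_of_forall_eq_one T fun f hf hfx ↦ mem_iInter.1 hy ⟨f, hf, hfx⟩⟩

theorem card_mul_le_of_subset_preimage_atomRel [T35Space K] {y : L} {s : Finset K}
    (hs : ↑s ⊆ (atomRel T c).preimage {y}) : s.card * c ≤ T 1 y := by
  obtain ⟨f, hf₀, hfx, hsum⟩ := exists_sum_le_one_of_finset s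
  calc s.card * c = ∑ x ∈ s, c * f x x := by simp [hfx]
    _ ≤ ∑ x ∈ s, T (f x) y := Finset.sum_le_sum fun x hx ↦ by
        obtain ⟨_, rfl, hxy⟩ := hs hx
        exact hxy (f x) (hf₀ x)
    _ = T (∑ x ∈ s, f x) y := by rw [map_sum, ContinuousMap.sum_apply]
    _ ≤ T 1 y := OrderHomClass.mono T hsum y

theorem finite_preimage_atomRel [T35Space K] (hc : 0 < c) (y : L) :
    ((atomRel T c).preimage {y}).Finite := by
  by_contra hinf
  obtain ⟨n, hn⟩ := exists_nat_gt (T 1 y / c)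
  obtain ⟨s, hs, rfl⟩ := Set.Infinite.exists_subset_card_eq hinf n
  exact ((div_lt_iff₀ hc).1 hn).not_ge (card_mul_le_of_subset_preimage_atomRel T hs)

end AtomRel

theorem stmt_0_general {K L : Type*} [TopologicalSpace K] [T35Space K]
    [TopologicalSpace L] [CompactSpace L] (T : C(K, ℝ) →ₚ[ℝ] C(L, ℝ)) {c : ℝ} (hc : 0 < c)
    (hT : ∀ f : C(K, ℝ), 0 ≤ f → ∀ x, f x = 1 → ∃ y, c ≤ T f y) :
    (∀ α : Ordinal, (cbDeriv K α).Nonempty → (cbDeriv L α).Nonempty) ∧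
      (Scattered L → Scattered K ∧ cbHeight K ≤ cbHeight L) := by
  have hfib (y : L) : derivedSet ((atomRel T c).preimage {y}) = ∅ :=
    eq_empty_of_forall_notMem fun _ hx ↦ Set.Infinite.of_accPt hx (finite_preimage_atomRel T hc y)
  have hderiv (α : Ordinal) (hα : (cbDeriv K α).Nonempty) : (cbDeriv L α).Nonempty := by
    obtain ⟨x, hx⟩ := hα
    obtain ⟨y, hy, -⟩ := cbDeriv_subset_preimage_cbDeriv (isClosed_atomRel T c)
      (dom_atomRel_eq_univ T hT) hfib α hx
    exact ⟨y, hy⟩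
  exact ⟨hderiv, scattered_and_cbHeight_le_of_nonempty_imp hderiv⟩

/-- If there is a positive isomorphic embedding `T : C(K) → C(L)` between spaces of
continuous real functions on compact Hausdorff spaces, then every nonempty
Cantor–Bendixson derivative of `K` forces the corresponding derivative of `L` to be
nonempty; in particular if `L` is scattered then so is `K` and `ht(K) ≤ ht(L)`. -/
theorem stmt_0 {K L : Type*} [TopologicalSpace K] [CompactSpace K] [T2Space K]
    [TopologicalSpace L] [CompactSpace L] [T2Space L]
    (T : C(K, ℝ) →L[ℝ] C(L, ℝ))
    (hpos : ∀ f : C(K, ℝ), 0 ≤ f → 0 ≤ T f)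
    (hemb : ∃ c : ℝ, 0 < c ∧ ∀ f : C(K, ℝ), c * ‖f‖ ≤ ‖T f‖) :
    (∀ α : Ordinal, (cbDeriv K α).Nonempty → (cbDeriv L α).Nonempty) ∧
      (Scattered L → Scattered K ∧ cbHeight K ≤ cbHeight L) := by
  obtain ⟨c, hc, hemb⟩ := hemb
  exact stmt_0_general (.mk₀ T.toLinearMap hpos) hc fun _ hf _ hfx ↦
    exists_le_apply_of_mul_norm_le (hpos _ hf) hc (hemb _) hfx
end

section
/- For each n ∈ ℕ with n ≥ 1, let Δ_n = {(λ₁, …, λ_n) ∈ (0,1]^n : λ₁ + ⋯ + λ_n = 1} and define C(n) = inf over λ ∈ Δ_n of max( 2/λ₁ − 1, max_{i=2,…,n} (2/λ_i + 1) ). Then C(n) = n + √((n−1)(n+3)), and the infimum is attained (namely at λ₁ = ((n+1) − √((n−1)(n+3)))/2 and λ₂ = ⋯ = λ_n = (1−λ₁)/(n−1)). -/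
/-!
Each `2 / λᵢ ± 1` is antitone in `λᵢ`, and two vectors with the same sum satisfy `λᵢ ≤ pᵢ` for some
`i`, so a feasible point `p` at which all these terms share a common value `c` is a minimizer of
their maximum. Solving `2 / λᵢ ± 1 = c` for `λᵢ` turns the constraint `∑ λᵢ = 1` into the secular
equation `2 / (c + 1) + (n - 1) * (2 / (c - 1)) = 1`, which is quadratic in `c` with larger root
`n + √((n - 1) * (n + 3))`.
-/

theorem div_div_sub_add_self {K : Type*} [Field K] {a b c : K} (ha : a ≠ 0) :
    a / (a / (c - b)) + b = c := by
  rw [div_div_cancel₀ ha, sub_add_cancel]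

section Equalization

variable {ι : Type*} [Fintype ι]

theorem isLeast_sup'_of_antitoneOn_of_forall_eq [Nonempty ι] {M β : Type*}
    [AddCommMonoid M] [LinearOrder M] [IsOrderedCancelAddMonoid M] [SemilatticeSup β]
    {s : ι → Set M} {f : ι → M → β} {p : ι → M} {c : β} (hf : ∀ i, AntitoneOn (f i) (s i))
    (hp : ∀ i, p i ∈ s i) (hc : ∀ i, f i (p i) = c) :
    IsLeast {r | ∃ l : ι → M, (∀ i, l i ∈ s i) ∧ ∑ i, l i = ∑ i, p i ∧
      r = Finset.univ.sup' Finset.univ_nonempty fun i => f i (l i)} c := by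
  refine ⟨⟨p, hp, rfl, by simp only [hc, Finset.sup'_const]⟩, ?_⟩
  rintro _ ⟨l, hl, hsum, rfl⟩
  obtain ⟨i, hi, hle⟩ := Finset.exists_le_of_sum_le Finset.univ_nonempty hsum.le
  calc
    c = f i (p i) := (hc i).symm
    _ ≤ f i (l i) := hf i (hl i) (hp i) hle
    _ ≤ _ := Finset.le_sup' (fun i => f i (l i)) hi

variable {K : Type*} [Field K] [LinearOrder K] [IsStrictOrderedRing K]

theorem div_sub_mem_Ioc_of_sum_eq_one {a b : ι → K} {c : K} (ha : ∀ i, 0 < a i)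
    (hb : ∀ i, b i < c) (hsum : ∑ i, a i / (c - b i) = 1) (i : ι) :
    a i / (c - b i) ∈ Set.Ioc 0 1 := by
  have hpos (j : ι) : 0 < a j / (c - b j) := div_pos (ha j) (sub_pos.2 (hb j))
  exact ⟨hpos i, hsum ▸ Finset.single_le_sum (fun j _ => (hpos j).le) (Finset.mem_univ i)⟩

theorem isLeast_sup'_div_add_of_sum_eq_one [Nonempty ι] {a b : ι → K} {c : K}
    (ha : ∀ i, 0 < a i) (hb : ∀ i, b i < c) (hsum : ∑ i, a i / (c - b i) = 1) :
    IsLeast {r | ∃ l : ι → K, (∀ i, l i ∈ Set.Ioc 0 1) ∧ ∑ i, l i = 1 ∧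
      r = Finset.univ.sup' Finset.univ_nonempty fun i => a i / l i + b i} c := by
  have hanti (i : ι) : AntitoneOn (fun x => a i / x + b i) (Set.Ioc 0 1) := fun x hx y _ hxy =>
    add_le_add_left (div_le_div_of_nonneg_left (ha i).le hx.1 hxy) (b i)
  simpa only [hsum] using isLeast_sup'_of_antitoneOn_of_forall_eq hanti
    (div_sub_mem_Ioc_of_sum_eq_one ha hb hsum) fun i => div_div_sub_add_self (ha i).ne'

end Equalization

/-- The constant `C(t) = t + √((t - 1) * (t + 3))` of the theorem, for a real parameter `t`
in place of `n`. It is meant for `1 ≤ t`: on `(-3, 1)` the square root takes its junk value `0`. -/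
noncomputable def minimaxValue (t : ℝ) : ℝ := t + √((t - 1) * (t + 3))

/-- The constant added to `2 / λᵢ`, where the first coordinate has index `0`. -/
def coordShift (i : ℕ) : ℝ := if i = 0 then -1 else 1

section MinimaxValue

variable {t : ℝ}

theorem le_minimaxValue (t : ℝ) : t ≤ minimaxValue t := le_add_of_nonneg_right (Real.sqrt_nonneg _)

theorem minimaxValue_sq (ht : 1 ≤ t) :
    minimaxValue t ^ 2 = 2 * t * minimaxValue t + 2 * t - 3 := by
  have hsqrt : √((t - 1) * (t + 3)) ^ 2 = (t - 1) * (t + 3) :=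
    Real.sq_sqrt (mul_nonneg (by linarith) (by linarith))
  unfold minimaxValue
  linear_combination hsqrt

theorem two_div_minimaxValue_add_one (ht : 1 ≤ t) :
    2 / (minimaxValue t + 1) = (t + 1 - √((t - 1) * (t + 3))) / 2 := by
  have hsqrt : √((t - 1) * (t + 3)) = minimaxValue t - t := (add_sub_cancel_left _ _).symm
  rw [hsqrt, div_eq_div_iff (by linarith [le_minimaxValue t]) two_ne_zero]
  linear_combination minimaxValue_sq ht

theorem secular_equation_minimaxValue (ht : 1 ≤ t) :
    2 / (minimaxValue t + 1) + (t - 1) * (2 / (minimaxValue t - 1)) = 1 := by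
  rcases ht.eq_or_lt with rfl | hlt
  · norm_num [minimaxValue]
  · have hle := le_minimaxValue t
    have hadd : minimaxValue t + 1 ≠ 0 := by linarith
    have hsub : minimaxValue t - 1 ≠ 0 := by linarith
    field_simp
    linear_combination -minimaxValue_sq ht

theorem coordShift_lt_minimaxValue {n : ℕ} (i : Fin n) : coordShift i < minimaxValue n := by
  have hle := le_minimaxValue n
  unfold coordShift
  split_ifs with hi
  · linarith [n.cast_nonneg (α := ℝ)]
  · have hn : (1 : ℝ) < n := by exact_mod_cast (by omega : 1 < n)
    linarith

theorem sum_two_div_minimaxValue_sub_coordShift {n : ℕ} (hn : 1 ≤ n) :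
    ∑ i : Fin n, 2 / (minimaxValue n - coordShift i) = 1 := by
  have hroot := secular_equation_minimaxValue (Nat.one_le_cast (α := ℝ).2 hn)
  obtain ⟨m, rfl⟩ := Nat.exists_eq_add_of_le' hn
  simpa [Fin.sum_univ_succ, coordShift] using hroot

theorem two_div_minimaxValue_sub_coordShift {n : ℕ} (i : Fin n) :
    2 / (minimaxValue n - coordShift i) =
      if i.val = 0 then ((n : ℝ) + 1 - √(((n : ℝ) - 1) * ((n : ℝ) + 3))) / 2
      else (1 - ((n : ℝ) + 1 - √(((n : ℝ) - 1) * ((n : ℝ) + 3))) / 2) / ((n : ℝ) - 1) := by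
  have hn : (1 : ℝ) ≤ n := by exact_mod_cast i.pos
  rw [← two_div_minimaxValue_add_one hn]
  unfold coordShift
  split_ifs with hi
  · rw [sub_neg_eq_add]
  · have hn' : (1 : ℝ) < n := by exact_mod_cast (by omega : 1 < n)
    rw [eq_div_iff (sub_pos.2 hn').ne']
    linear_combination secular_equation_minimaxValue hn

end MinimaxValue

/-- For `n ≥ 1`, the infimum over the simplex
`Δ_n = {λ ∈ (0,1]^n : Σ λᵢ = 1}` of
`max (2/λ₁ - 1, max_{i≥2} (2/λᵢ + 1))` equals `n + √((n-1)(n+3))`,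
and it is attained, namely at `λ₁ = ((n+1) - √((n-1)(n+3)))/2`,
`λᵢ = (1 - λ₁)/(n-1)` for `i ≥ 2`. -/
theorem stmt_5 (n : ℕ) (hn : 1 ≤ n) :
    haveI : Nonempty (Fin n) := ⟨⟨0, hn⟩⟩
    let Cn : ℝ := (n : ℝ) + Real.sqrt (((n : ℝ) - 1) * ((n : ℝ) + 3))
    let F : (Fin n → ℝ) → ℝ := fun l =>
      Finset.univ.sup' Finset.univ_nonempty
        (fun i : Fin n => if i.val = 0 then 2 / l i - 1 else 2 / l i + 1)
    let x₀ : ℝ := ((n : ℝ) + 1 - Real.sqrt (((n : ℝ) - 1) * ((n : ℝ) + 3))) / 2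
    let l₀ : Fin n → ℝ := fun i => if i.val = 0 then x₀ else (1 - x₀) / ((n : ℝ) - 1)
    IsLeast {r : ℝ | ∃ l : Fin n → ℝ,
        (∀ i, l i ∈ Set.Ioc (0 : ℝ) 1) ∧ (∑ i, l i) = 1 ∧ r = F l} Cn ∧
      (∀ i, l₀ i ∈ Set.Ioc (0 : ℝ) 1) ∧ (∑ i, l₀ i) = 1 ∧ F l₀ = Cn := by
  intro Cn F x₀ l₀
  have : Nonempty (Fin n) := ⟨⟨0, hn⟩⟩
  have hF : F = fun l => Finset.univ.sup' Finset.univ_nonempty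
      fun i : Fin n => 2 / l i + coordShift i := by
    simp only [F, coordShift, add_ite, sub_eq_add_neg]
  have hl₀ : l₀ = fun i : Fin n => 2 / (Cn - coordShift i) :=
    funext fun i => (two_div_minimaxValue_sub_coordShift i).symm
  have hsum : ∑ i : Fin n, 2 / (Cn - coordShift i) = 1 :=
    sum_two_div_minimaxValue_sub_coordShift hn
  have hshift : ∀ i : Fin n, coordShift i < Cn := coordShift_lt_minimaxValue
  rw [hF, hl₀]
  refine ⟨isLeast_sup'_div_add_of_sum_eq_one (fun _ => two_pos) hshift hsum,
    div_sub_mem_Ioc_of_sum_eq_one (fun _ => two_pos) hshift hsum, hsum, ?_⟩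
  simp only [div_div_sub_add_self (two_ne_zero' ℝ), Finset.sup'_const]
end

section
/- Let K and L be compact Hausdorff spaces and T : C(K) → C(L) a positive isomorphic embedding. Let 𝒰 be a point-bounded family of nonempty open subsets of K, and for each U ∈ 𝒰 let f_U ∈ C(K, [0,1]) be a function of norm 1 vanishing outside U. Then for each ε with 0 < ε < 1/‖T⁻¹‖, the family { {y ∈ L : Tf_U(y) ≥ ε} : U ∈ 𝒰 } is a point-bounded family of compact subsets of L, each having nonempty interior. -/
open Set

/-!
If at most `k` of the sets `U` meet at each point, the finite partial sums of the `f_U` are at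
most `k`, so positivity of `T` bounds those of the `T f_U` by `M = k * ‖T 1‖`. Hence at any
`y`, at most `M / ε` of the values `T f_U y` can reach `ε`. On the other hand `‖T f_U‖ ≥ c > ε`
and `T f_U ≥ 0`, so `T f_U` exceeds `ε` on a nonempty open set.
-/

/-- The family `(U i)_{i ∈ s}` has order at most `k`: every point lies in `U i` for at most `k`
indices `i ∈ s`. The family is point-bounded when this holds for some `k`. Using `encard` makes
finiteness part of the bound. -/
def HasOrderLE {ι X : Type*} (s : Set ι) (U : ι → Set X) (k : ℕ) : Prop :=
  ∀ x, {i ∈ s | x ∈ U i}.encard ≤ k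

theorem hasOrderLE_iff_finite_ncard_le {ι X : Type*} {s : Set ι} {U : ι → Set X} {k : ℕ} :
    HasOrderLE s U k ↔ ∀ x, {i ∈ s | x ∈ U i}.Finite ∧ {i ∈ s | x ∈ U i}.ncard ≤ k :=
  forall_congr' fun _ ↦ encard_le_coe_iff_finite_ncard_le

theorem HasOrderLE.sum_le {ι X R : Type*} [Semiring R] [PartialOrder R] [IsOrderedRing R]
    {s : Set ι} {U : ι → Set X} {k : ℕ} (hU : HasOrderLE s U k) {F : Finset ι} (hF : ↑F ⊆ s)
    {a : ι → R} {x : X} (ha_one : ∀ i ∈ F, a i ≤ 1) (ha_zero : ∀ i ∈ F, x ∉ U i → a i ≤ 0) :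
    ∑ i ∈ F, a i ≤ k := by
  classical
  have hcard : (F.filter (x ∈ U ·)).card ≤ k := by
    rw [← Nat.cast_le (α := ℕ∞), ← encard_coe_eq_coe_finsetCard, Finset.coe_filter]
    have hsub : {i | i ∈ F ∧ x ∈ U i} ⊆ {i ∈ s | x ∈ U i} := fun i hi ↦ ⟨hF hi.1, hi.2⟩
    exact (encard_le_encard hsub).trans (hU x)
  calc ∑ i ∈ F, a i ≤ ∑ i ∈ F, if x ∈ U i then 1 else 0 := by
        refine Finset.sum_le_sum fun i hi ↦ ?_
        split_ifs with hx
        exacts [ha_one i hi, ha_zero i hi hx]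
    _ = (F.filter (x ∈ U ·)).card := Finset.sum_boole _ _
    _ ≤ k := Nat.mono_cast hcard

theorem encard_le_of_forall_finset_card_le {ι : Type*} {s : Set ι} {n : ℕ}
    (h : ∀ F : Finset ι, ↑F ⊆ s → F.card ≤ n) : s.encard ≤ n := by
  by_contra! hlt
  obtain ⟨t, hts, ht⟩ := exists_subset_encard_eq (Order.add_one_le_of_lt hlt)
  lift t to Finset ι using finite_of_encard_eq_coe (k := n + 1) (mod_cast ht)
  have hcard : t.card = n + 1 := by
    rw [encard_coe_eq_coe_finsetCard] at ht
    exact_mod_cast ht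
  have := h t hts
  lia

theorem encard_setOf_le_le_floor_div {ι R : Type*} [Field R] [LinearOrder R]
    [IsStrictOrderedRing R] [FloorSemiring R] {s : Set ι} {a : ι → R} {ε M : R} (hε : 0 < ε)
    (hsum : ∀ F : Finset ι, ↑F ⊆ s → ∑ i ∈ F, a i ≤ M) :
    {i ∈ s | ε ≤ a i}.encard ≤ ⌊M / ε⌋₊ := by
  refine encard_le_of_forall_finset_card_le fun F hF ↦ Nat.le_floor ?_
  rw [le_div_iff₀ hε, ← nsmul_eq_mul]
  exact (Finset.card_nsmul_le_sum F a ε fun i hi ↦ (hF hi).2).trans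
    (hsum F fun i hi ↦ (hF hi).1)

theorem exists_lt_apply_of_lt_norm {L : Type*} [TopologicalSpace L] [CompactSpace L]
    {g : C(L, ℝ)} (hg : 0 ≤ g) {ε : ℝ} (hε : 0 ≤ ε) (hlt : ε < ‖g‖) : ∃ y, ε < g y := by
  contrapose! hlt
  exact (g.norm_le hε).2 fun y ↦ (Real.norm_of_nonneg (hg y)).trans_le (hlt y)

section PositiveMaps

variable {ι K L : Type*} [TopologicalSpace K] [TopologicalSpace L] [CompactSpace L]

theorem positiveLinearMap_apply_le_mul_norm_map_one (T : C(K, ℝ) →ₚ[ℝ] C(L, ℝ))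
    {g : C(K, ℝ)} {r : ℝ} (hr : 0 ≤ r) (hg : ∀ x, g x ≤ r) (y : L) : T g y ≤ r * ‖T 1‖ :=
  calc T g y ≤ T (r • 1) y := OrderHomClass.mono T (fun x ↦ by simpa using hg x) y
    _ = r * T 1 y := by simp
    _ ≤ r * ‖T 1‖ := mul_le_mul_of_nonneg_left ((T 1).apply_le_norm y) hr

theorem HasOrderLE.superlevel_map {s : Set ι} {U : ι → Set K} {k : ℕ} (hU : HasOrderLE s U k)
    (T : C(K, ℝ) →ₚ[ℝ] C(L, ℝ)) {f : ι → C(K, ℝ)} (hf_one : ∀ i ∈ s, f i ≤ 1)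
    (hf_zero : ∀ i ∈ s, ∀ x ∉ U i, f i x ≤ 0) {ε : ℝ} (hε : 0 < ε) :
    HasOrderLE s (fun i ↦ {y | ε ≤ T (f i) y}) ⌊k * ‖T 1‖ / ε⌋₊ := by
  refine fun y ↦ encard_setOf_le_le_floor_div hε fun F hF ↦ ?_
  have hsum : ∀ x, (∑ i ∈ F, f i) x ≤ k := fun x ↦ by
    rw [ContinuousMap.sum_apply]
    exact hU.sum_le hF (fun i hi ↦ hf_one i (hF hi) x) fun i hi ↦ hf_zero i (hF hi) x
  simpa only [map_sum, ContinuousMap.sum_apply] using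
    positiveLinearMap_apply_le_mul_norm_map_one T k.cast_nonneg hsum y

theorem stmt_15_general [CompactSpace K] (T : C(K, ℝ) →ₚ[ℝ] C(L, ℝ)) {c : ℝ}
    (hT : ∀ f : C(K, ℝ), 0 ≤ f → c * ‖f‖ ≤ ‖T f‖) {s : Set ι} {U : ι → Set K} {k : ℕ}
    (hU : HasOrderLE s U k) {f : ι → C(K, ℝ)}
    (hf : ∀ i ∈ s, 0 ≤ f i ∧ ‖f i‖ = 1 ∧ ∀ x ∉ U i, f i x = 0)
    {ε : ℝ} (hε : 0 < ε) (hεc : ε < c) :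
    (∀ i ∈ s, IsCompact {y | ε ≤ T (f i) y} ∧ (interior {y | ε ≤ T (f i) y}).Nonempty) ∧
      HasOrderLE s (fun i ↦ {y | ε ≤ T (f i) y}) ⌊k * ‖T 1‖ / ε⌋₊ := by
  refine ⟨fun i hi ↦ ⟨?compact, ?interior⟩, hU.superlevel_map T ?le_one ?le_zero hε⟩
  case compact => exact (isClosed_le continuous_const (T (f i)).continuous).isCompact
  case interior =>
    obtain ⟨hf_nonneg, hf_norm, -⟩ := hf i hi
    have hlt : ε < ‖T (f i)‖ := hεc.trans_le <| by simpa [hf_norm] using hT (f i) hf_nonneg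
    obtain ⟨y, hy⟩ := exists_lt_apply_of_lt_norm (map_nonneg T hf_nonneg) hε.le hlt
    exact ⟨y, lt_subset_interior_le continuous_const (T (f i)).continuous hy⟩
  case le_one => exact fun i hi x ↦ ((f i).apply_le_norm x).trans_eq (hf i hi).2.1
  case le_zero => exact fun i hi x hx ↦ ((hf i hi).2.2 x hx).le

end PositiveMaps

/-- Let `T : C(K) → C(L)` be a positive embedding (bounded below by `c > 0`,
so that `ε < c ≤ 1/‖T⁻¹‖` is permitted), let `𝒰` be a point-bounded family of nonempty
open subsets of `K` (of order at most `k`), and for each `U ∈ 𝒰` let `f U` be a norm-one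
`[0,1]`-valued continuous function vanishing outside `U`. Then for `0 < ε < c` the sets
`{y ∈ L : ε ≤ T(f U)(y)}`, `U ∈ 𝒰`, are compact with nonempty interior, and the family
is point-bounded. -/
theorem stmt_15 {K L : Type*} [TopologicalSpace K] [CompactSpace K] [T2Space K]
    [TopologicalSpace L] [CompactSpace L] [T2Space L]
    (T : C(K, ℝ) →L[ℝ] C(L, ℝ))
    (hpos : ∀ f : C(K, ℝ), 0 ≤ f → 0 ≤ T f)
    (c : ℝ) (hc : 0 < c) (hemb : ∀ f : C(K, ℝ), c * ‖f‖ ≤ ‖T f‖)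
    (𝒰 : Set (Set K)) (h𝒰 : ∀ U ∈ 𝒰, U.Nonempty ∧ IsOpen U)
    (k : ℕ) (hpb : ∀ x : K, {U ∈ 𝒰 | x ∈ U}.Finite ∧ {U ∈ 𝒰 | x ∈ U}.ncard ≤ k)
    (f : Set K → C(K, ℝ))
    (hf : ∀ U ∈ 𝒰, (∀ x : K, f U x ∈ Set.Icc (0 : ℝ) 1) ∧ ‖f U‖ = 1 ∧
      ∀ x ∉ U, f U x = 0)
    (ε : ℝ) (hε0 : 0 < ε) (hεc : ε < c) :
    (∀ U ∈ 𝒰, IsCompact {y : L | ε ≤ T (f U) y} ∧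
      (interior {y : L | ε ≤ T (f U) y}).Nonempty) ∧
    ∃ m : ℕ, ∀ y : L, {U ∈ 𝒰 | ε ≤ T (f U) y}.Finite ∧
      {U ∈ 𝒰 | ε ≤ T (f U) y}.ncard ≤ m := by
  have ⟨hlevel, hord⟩ := stmt_15_general (.mk₀ T.toLinearMap hpos) (fun g _ ↦ hemb g)
    (hasOrderLE_iff_finite_ncard_le (U := id).2 hpb)
    (fun U hU ↦ ⟨fun x ↦ ((hf U hU).1 x).1, (hf U hU).2⟩) hε0 hεc
  exact ⟨hlevel, _, hasOrderLE_iff_finite_ncard_le.1 hord⟩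
end

section
/- Let K₁ and K₂ be nonempty compact Hausdorff spaces and T : C(K₁) → C(K₂) a positive surjective linear isomorphism. Then ‖T‖ = ‖T(𝟏)‖ and T(𝟏) ≥ (1/‖T⁻¹‖)·𝟏, where 𝟏 denotes the constant-one function. Moreover, there exists a positive surjective linear isomorphism S : C(K₁) → C(K₂) with ‖S‖ = 1, S(𝟏) = 𝟏, and ‖S⁻¹‖ ≤ ‖T‖·‖T⁻¹‖. -/
open Set

/-!
Positivity turns `f ≤ ‖f‖ • 1` into `T f ≤ ‖f‖ • T 1`. Applied to `±f` this gives `‖T‖ = ‖T 1‖`, and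
applied to `f = T⁻¹ 1` it bounds `T 1` from below by `‖T⁻¹‖⁻¹`. Hence `T 1` is invertible in
`C(K₂, ℝ)`, and `S f = (T 1)⁻¹ * T f` is the required unital isomorphism.
-/

section Positive

variable {X Y : Type*} [TopologicalSpace X] [CompactSpace X] [TopologicalSpace Y]

theorem map_le_norm_smul_map_one {E : Type*} [AddCommGroup E] [PartialOrder E]
    [IsOrderedAddMonoid E] [Module ℝ E] (T : C(X, ℝ) →ₗ[ℝ] E) (hT : ∀ f, 0 ≤ f → 0 ≤ T f)
    (f : C(X, ℝ)) : T f ≤ ‖f‖ • T 1 := by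
  have hf : 0 ≤ ‖f‖ • 1 - f := fun x => by simpa using f.apply_le_norm x
  simpa only [map_sub, map_smul, sub_nonneg] using hT _ hf

variable [CompactSpace Y]

theorem norm_map_le_norm_mul_norm_map_one (T : C(X, ℝ) →ₗ[ℝ] C(Y, ℝ))
    (hT : ∀ f, 0 ≤ f → 0 ≤ T f) (f : C(X, ℝ)) : ‖T f‖ ≤ ‖T 1‖ * ‖f‖ := by
  have apply_le (g : C(X, ℝ)) (y : Y) : T g y ≤ ‖T 1‖ * ‖g‖ := by
    calc T g y ≤ ‖g‖ * T 1 y := map_le_norm_smul_map_one T hT g y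
      _ ≤ ‖g‖ * ‖T 1‖ := by gcongr; exact (T 1).apply_le_norm y
      _ = ‖T 1‖ * ‖g‖ := mul_comm _ _
  refine (ContinuousMap.norm_le _ (by positivity)).2 fun y => abs_le'.2 ⟨apply_le f y, ?_⟩
  simpa using apply_le (-f) y

theorem opNorm_eq_norm_map_one [Nonempty X] (T : C(X, ℝ) →L[ℝ] C(Y, ℝ))
    (hT : ∀ f, 0 ≤ f → 0 ≤ T f) : ‖T‖ = ‖T 1‖ :=
  le_antisymm
    (T.opNorm_le_bound (norm_nonneg _) (norm_map_le_norm_mul_norm_map_one T.toLinearMap hT))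
    (T.unit_le_opNorm 1 norm_one.le)

theorem inv_norm_symm_smul_one_le_map_one [Nonempty Y] (T : C(X, ℝ) ≃L[ℝ] C(Y, ℝ))
    (hT : ∀ f, 0 ≤ f → 0 ≤ T f) : ‖(T.symm : C(Y, ℝ) →L[ℝ] C(X, ℝ))‖⁻¹ • 1 ≤ T 1 := by
  have norm_le : ‖T.symm 1‖ ≤ ‖(T.symm : C(Y, ℝ) →L[ℝ] C(X, ℝ))‖ :=
    (T.symm : C(Y, ℝ) →L[ℝ] C(X, ℝ)).unit_le_opNorm 1 norm_one.le
  refine (inv_smul_le_iff_of_pos T.symm.norm_pos).2 ?_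
  calc (1 : C(Y, ℝ)) = T (T.symm 1) := (T.apply_symm_apply 1).symm
    _ ≤ ‖T.symm 1‖ • T 1 := map_le_norm_smul_map_one (T : C(X, ℝ) →ₗ[ℝ] C(Y, ℝ)) hT _
    _ ≤ _ := smul_le_smul_of_nonneg_right norm_le (hT 1 zero_le_one)

theorem isUnit_map_one [Nonempty Y] (T : C(X, ℝ) ≃L[ℝ] C(Y, ℝ))
    (hT : ∀ f, 0 ≤ f → 0 ≤ T f) : IsUnit (T 1) := by
  refine (ContinuousMap.isUnit_iff_forall_ne_zero _).2 fun y => ne_of_gt ?_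
  calc 0 < ‖(T.symm : C(Y, ℝ) →L[ℝ] C(X, ℝ))‖⁻¹ := inv_pos.2 T.symm.norm_pos
    _ ≤ T 1 y := by simpa using inv_norm_symm_smul_one_le_map_one T hT y

end Positive

theorem continuousMap_units_inv_nonneg {Y : Type*} [TopologicalSpace Y] {u : C(Y, ℝ)ˣ}
    (hu : 0 ≤ (u : C(Y, ℝ))) : 0 ≤ (↑u⁻¹ : C(Y, ℝ)) := by
  intro y
  have inv_mul_apply : (↑u⁻¹ : C(Y, ℝ)) y * (u : C(Y, ℝ)) y = 1 := DFunLike.congr_fun u.inv_mul y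
  calc 0 ≤ ((u : C(Y, ℝ)) y)⁻¹ := inv_nonneg.2 (hu y)
    _ = (↑u⁻¹ : C(Y, ℝ)) y := (eq_inv_of_mul_eq_one_left inv_mul_apply).symm

section Normalize

variable {𝕜 E A : Type*} [NontriviallyNormedField 𝕜] [SeminormedAddCommGroup E] [NormedSpace 𝕜 E]
  [SeminormedRing A] [NormedAlgebra 𝕜 A]

/-- The normalization `x ↦ (T e)⁻¹ * T x` of an isomorphism `T` onto a normed algebra at a vector
`e` whose image is invertible; it sends `e` to `1`. -/
noncomputable def normalizeAt (T : E ≃L[𝕜] A) {e : E} (he : IsUnit (T e)) : E ≃L[𝕜] A :=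
  T.trans (ContinuousLinearEquiv.smulLeft he.unit⁻¹)

variable (T : E ≃L[𝕜] A) {e : E} (he : IsUnit (T e))

theorem normalizeAt_apply (x : E) : normalizeAt T he x = ↑he.unit⁻¹ * T x := rfl

theorem normalizeAt_symm_apply (a : A) : (normalizeAt T he).symm a = T.symm (T e * a) := rfl

theorem normalizeAt_self : normalizeAt T he e = 1 := he.val_inv_mul

theorem norm_normalizeAt_symm_le :
    ‖((normalizeAt T he).symm : A →L[𝕜] E)‖ ≤ ‖T e‖ * ‖(T.symm : A →L[𝕜] E)‖ := by
  refine ContinuousLinearMap.opNorm_le_bound _ (by positivity) fun a => ?_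
  calc ‖(normalizeAt T he).symm a‖ = ‖T.symm (T e * a)‖ := by rw [normalizeAt_symm_apply]
    _ ≤ ‖(T.symm : A →L[𝕜] E)‖ * ‖T e * a‖ := (T.symm : A →L[𝕜] E).le_opNorm _
    _ ≤ ‖(T.symm : A →L[𝕜] E)‖ * (‖T e‖ * ‖a‖) := by gcongr; exact norm_mul_le _ _
    _ = ‖T e‖ * ‖(T.symm : A →L[𝕜] E)‖ * ‖a‖ := by ring

end Normalize

theorem normalizeAt_nonneg {X Y : Type*} [TopologicalSpace X] [CompactSpace X] [TopologicalSpace Y]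
    [CompactSpace Y] (T : C(X, ℝ) ≃L[ℝ] C(Y, ℝ)) (hT : ∀ f, 0 ≤ f → 0 ≤ T f) {e : C(X, ℝ)}
    (he₀ : 0 ≤ e) (he : IsUnit (T e)) {f : C(X, ℝ)} (hf : 0 ≤ f) : 0 ≤ normalizeAt T he f := by
  rw [normalizeAt_apply]
  exact mul_nonneg (continuousMap_units_inv_nonneg (hT e he₀)) (hT f hf)

theorem stmt_17_general {K₁ K₂ : Type*} [TopologicalSpace K₁] [CompactSpace K₁] [Nonempty K₁]
    [TopologicalSpace K₂] [CompactSpace K₂] [Nonempty K₂] (T : C(K₁, ℝ) ≃L[ℝ] C(K₂, ℝ))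
    (hpos : ∀ f : C(K₁, ℝ), 0 ≤ f → 0 ≤ T f) :
    ‖(T : C(K₁, ℝ) →L[ℝ] C(K₂, ℝ))‖ = ‖T (1 : C(K₁, ℝ))‖ ∧
    (‖(T.symm : C(K₂, ℝ) →L[ℝ] C(K₁, ℝ))‖)⁻¹ • (1 : C(K₂, ℝ)) ≤ T (1 : C(K₁, ℝ)) ∧
    ∃ S : C(K₁, ℝ) ≃L[ℝ] C(K₂, ℝ),
      (∀ f : C(K₁, ℝ), 0 ≤ f → 0 ≤ S f) ∧
      ‖(S : C(K₁, ℝ) →L[ℝ] C(K₂, ℝ))‖ = 1 ∧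
      S (1 : C(K₁, ℝ)) = 1 ∧
      ‖(S.symm : C(K₂, ℝ) →L[ℝ] C(K₁, ℝ))‖ ≤
        ‖(T : C(K₁, ℝ) →L[ℝ] C(K₂, ℝ))‖ * ‖(T.symm : C(K₂, ℝ) →L[ℝ] C(K₁, ℝ))‖ := by
  have norm_T := opNorm_eq_norm_map_one (T : C(K₁, ℝ) →L[ℝ] C(K₂, ℝ)) hpos
  have isUnit_T_one := isUnit_map_one T hpos
  let S := normalizeAt T isUnit_T_one
  have S_one : S 1 = 1 := normalizeAt_self T isUnit_T_one
  have S_nonneg (f : C(K₁, ℝ)) (hf : 0 ≤ f) : 0 ≤ S f :=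
    normalizeAt_nonneg T hpos zero_le_one isUnit_T_one hf
  have norm_S : ‖(S : C(K₁, ℝ) →L[ℝ] C(K₂, ℝ))‖ = 1 := by
    rw [opNorm_eq_norm_map_one _ S_nonneg, ContinuousLinearEquiv.coe_coe, S_one, norm_one]
  refine ⟨norm_T, inv_norm_symm_smul_one_le_map_one T hpos, S, S_nonneg, norm_S, S_one, ?_⟩
  rw [norm_T]
  exact norm_normalizeAt_symm_le T isUnit_T_one

/-- If `T : C(K₁) → C(K₂)` is a positive surjective isomorphism between spaces of
continuous functions on nonempty compact Hausdorff spaces, then `‖T‖ = ‖T 𝟏‖`,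
`T 𝟏 ≥ (1/‖T⁻¹‖)·𝟏`, and there is a positive surjective isomorphism `S` with
`‖S‖ = 1`, `S 𝟏 = 𝟏` and `‖S⁻¹‖ ≤ ‖T‖·‖T⁻¹‖`. -/
theorem stmt_17 {K₁ K₂ : Type*} [TopologicalSpace K₁] [CompactSpace K₁] [T2Space K₁]
    [Nonempty K₁] [TopologicalSpace K₂] [CompactSpace K₂] [T2Space K₂] [Nonempty K₂]
    (T : C(K₁, ℝ) ≃L[ℝ] C(K₂, ℝ))
    (hpos : ∀ f : C(K₁, ℝ), 0 ≤ f → 0 ≤ T f) :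
    ‖(T : C(K₁, ℝ) →L[ℝ] C(K₂, ℝ))‖ = ‖T (1 : C(K₁, ℝ))‖ ∧
    (‖(T.symm : C(K₂, ℝ) →L[ℝ] C(K₁, ℝ))‖)⁻¹ • (1 : C(K₂, ℝ)) ≤ T (1 : C(K₁, ℝ)) ∧
    ∃ S : C(K₁, ℝ) ≃L[ℝ] C(K₂, ℝ),
      (∀ f : C(K₁, ℝ), 0 ≤ f → 0 ≤ S f) ∧
      ‖(S : C(K₁, ℝ) →L[ℝ] C(K₂, ℝ))‖ = 1 ∧
      S (1 : C(K₁, ℝ)) = 1 ∧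
      ‖(S.symm : C(K₂, ℝ) →L[ℝ] C(K₁, ℝ))‖ ≤
        ‖(T : C(K₁, ℝ) →L[ℝ] C(K₂, ℝ))‖ * ‖(T.symm : C(K₂, ℝ) →L[ℝ] C(K₁, ℝ))‖ :=
  stmt_17_general T hpos
end

section
/- Let K and L be compact Hausdorff spaces, let T : C(K) → C(L) be a positive surjective linear isomorphism with T(𝟏) = ‖T‖·𝟏, and let α > 0. If there exists a nonnegative function f ∈ C(K) with ‖f‖ = 1 and ‖Tf‖ ≤ α·‖T‖, then ‖T‖·‖T⁻¹‖ ≥ 2/α − 1. -/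
open Set

/-!
Since `0 ≤ T f ≤ a ‖T‖`, the function `T ((2 / a) • f)` takes values in `[0, 2 ‖T‖]`, so subtracting
`T 1`, the midpoint of this interval, leaves a function of norm at most `‖T‖`. On the other hand
`(2 / a) • f - 1` has norm at least `2 / a - 1`, and `T⁻¹` can only stretch by `‖T⁻¹‖`.
-/

lemma norm_sub_smul_one_le_of_nonneg {L : Type*} [TopologicalSpace L] [CompactSpace L]
    {u : C(L, ℝ)} {t : ℝ} (hu : 0 ≤ u) (hut : ‖u‖ ≤ 2 * t) : ‖u - t • (1 : C(L, ℝ))‖ ≤ t := by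
  have ht : 0 ≤ t := by linarith [norm_nonneg u]
  refine (ContinuousMap.norm_le _ ht).2 fun y ↦ ?_
  have hy_nonneg : 0 ≤ u y := hu y
  have hy_le : u y ≤ 2 * t := (u.apply_le_norm y).trans hut
  suffices |u y - t| ≤ t by simpa using this
  exact abs_le.2 ⟨by linarith, by linarith⟩

lemma norm_map_two_div_smul_sub_le {E L : Type*} [AddCommGroup E] [Module ℝ E]
    [TopologicalSpace L] [CompactSpace L] {T : E →ₗ[ℝ] C(L, ℝ)} {e f : E} {a t : ℝ}
    (hTe : T e = t • (1 : C(L, ℝ))) (ha : 0 < a) (hTf_nonneg : 0 ≤ T f)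
    (hTf_le : ‖T f‖ ≤ a * t) : ‖T ((2 / a) • f - e)‖ ≤ t := by
  have hscale : 0 ≤ 2 / a := by positivity
  have hscaled_le : ‖(2 / a) • T f‖ ≤ 2 * t :=
    calc ‖(2 / a) • T f‖ = 2 / a * ‖T f‖ := norm_smul_of_nonneg hscale (T f)
      _ ≤ 2 / a * (a * t) := by gcongr
      _ = 2 * t := by field_simp
  rw [map_sub, map_smul, hTe]
  exact norm_sub_smul_one_le_of_nonneg (smul_nonneg hscale hTf_nonneg) hscaled_le

theorem stmt_18_general {E L : Type*} [SeminormedAddCommGroup E] [NormedSpace ℝ E]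
    [TopologicalSpace L] [CompactSpace L] (T : E →ₗ[ℝ] C(L, ℝ)) {M : NNReal}
    (hT : AntilipschitzWith M T) {e f : E} {a t : ℝ} (he : ‖e‖ ≤ 1)
    (hTe : T e = t • (1 : C(L, ℝ))) (ha : 0 < a) (hTf_nonneg : 0 ≤ T f) (hf : ‖f‖ = 1)
    (hTf_le : ‖T f‖ ≤ a * t) : 2 / a - 1 ≤ t * M :=
  calc 2 / a - 1 ≤ ‖(2 / a) • f‖ - ‖e‖ := by
        rw [norm_smul_of_nonneg (by positivity), hf, mul_one]
        gcongr
    _ ≤ ‖(2 / a) • f - e‖ := norm_sub_norm_le _ _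
    _ ≤ M * ‖T ((2 / a) • f - e)‖ := ZeroHomClass.bound_of_antilipschitz T hT _
    _ ≤ M * t := by gcongr; exact norm_map_two_div_smul_sub_le hTe ha hTf_nonneg hTf_le
    _ = t * M := mul_comm _ _

/-- If `T : C(K) → C(L)` is a positive surjective isomorphism with `T 𝟏 = ‖T‖·𝟏`,
`a > 0`, and there is a nonnegative norm-one `f ∈ C(K)` with `‖T f‖ ≤ a·‖T‖`, then
`‖T‖·‖T⁻¹‖ ≥ 2/a - 1`. -/
theorem stmt_18 {K L : Type*} [TopologicalSpace K] [CompactSpace K] [T2Space K]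
    [TopologicalSpace L] [CompactSpace L] [T2Space L]
    (T : C(K, ℝ) ≃L[ℝ] C(L, ℝ))
    (hpos : ∀ f : C(K, ℝ), 0 ≤ f → 0 ≤ T f)
    (hT1 : T (1 : C(K, ℝ)) = ‖(T : C(K, ℝ) →L[ℝ] C(L, ℝ))‖ • (1 : C(L, ℝ)))
    (a : ℝ) (ha : 0 < a)
    (f : C(K, ℝ)) (hf0 : 0 ≤ f) (hfn : ‖f‖ = 1)
    (hTf : ‖T f‖ ≤ a * ‖(T : C(K, ℝ) →L[ℝ] C(L, ℝ))‖) :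
    2 / a - 1 ≤
      ‖(T : C(K, ℝ) →L[ℝ] C(L, ℝ))‖ * ‖(T.symm : C(L, ℝ) →L[ℝ] C(K, ℝ))‖ := by
  have hone : ‖(1 : C(K, ℝ))‖ ≤ 1 := (ContinuousMap.norm_le _ zero_le_one).2 fun x ↦ by simp
  exact stmt_18_general (T : C(K, ℝ) →ₗ[ℝ] C(L, ℝ)) T.antilipschitz hone hT1 ha (hpos f hf0) hfn hTf
end
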